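/- For every real number x ≥ 1, the sum R₂(x) := Σ_{x < n ≤ 2x} r(n)² satisfies R₂(x) ≤ 19.2·x·log(2e²x). -/

import Mathlib

/-- `r n` is the number of representations of `n` as a sum of two squares of integers. -/
noncomputable def r (n : ℕ) : ℕ := Set.ncard {p : ℤ × ℤ | p.1 ^ 2 + p.2 ^ 2 = (n : ℤ)}


/-- lattice points of norm `n` -/
noncomputable def Sp (n : ℕ) : Finset (ℤ × ℤ) :=
  ((Finset.Icc (-(n:ℤ)) n) ×ˢ (Finset.Icc (-(n:ℤ)) n)).filter
    (fun p => p.1 ^ 2 + p.2 ^ 2 = (n : ℤ))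

lemma mem_Sp (n : ℕ) (p : ℤ × ℤ) : p ∈ Sp n ↔ p.1 ^ 2 + p.2 ^ 2 = (n : ℤ) := by
  unfold Sp
  simp only [Finset.mem_filter, Finset.mem_product, Finset.mem_Icc, and_iff_right_iff_imp]
  intro h
  refine ⟨⟨?_, ?_⟩, ?_, ?_⟩ <;> nlinarith [sq_nonneg p.1, sq_nonneg p.2, Int.le_self_sq p.1, Int.le_self_sq p.2, Int.le_self_sq (-p.1), Int.le_self_sq (-p.2)]

lemma r_eq (n : ℕ) : r n = (Sp n).card := by
  unfold r
  rw [← Set.ncard_coe_finset]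
  congr 1
  ext p
  simp [mem_Sp]

/-- Gaussian integers of norm `n` -/
noncomputable def Gp (n : ℕ) : Finset GaussianInt := (Sp n).image (fun p => ⟨p.1, p.2⟩)

lemma mem_Gp (n : ℕ) (z : GaussianInt) : z ∈ Gp n ↔ z.norm = n := by
  unfold Gp
  rw [Finset.mem_image]
  constructor
  · rintro ⟨p, hp, rfl⟩
    rw [mem_Sp] at hp
    simp only [Zsqrtd.norm_def]
    linarith
  · intro h
    refine ⟨(z.re, z.im), ?_, ?_⟩
    · rw [mem_Sp]
      simp only [Zsqrtd.norm_def] at h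
      simp only
      linarith
    · rfl

lemma card_Gp (n : ℕ) : (Gp n).card = r n := by
  rw [r_eq]
  unfold Gp
  apply Finset.card_image_of_injective
  rintro ⟨a, b⟩ ⟨c, d⟩ h
  simp only [Zsqrtd.mk.injEq] at h
  simp [h.1, h.2]

lemma factor (z w : GaussianInt) (hz : z ≠ 0) (h : z.norm = w.norm) :
    ∃ g a u : GaussianInt, z = g * a ∧ w = g * u * star a ∧ u.norm = 1 ∧ a.norm % 2 = 1 := by
  set g := EuclideanDomain.gcd z w with hg
  obtain ⟨a, ha⟩ : g ∣ z := EuclideanDomain.gcd_dvd_left z w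
  obtain ⟨b, hb⟩ : g ∣ w := EuclideanDomain.gcd_dvd_right z w
  have hbez := EuclideanDomain.gcd_eq_gcd_ab z w
  rw [← hg] at hbez
  have hg0 : g ≠ 0 := by
    intro h0; rw [h0, zero_mul] at ha; exact hz ha
  have ha0 : a ≠ 0 := by
    intro h0; rw [h0, mul_zero] at ha; exact hz ha
  set x := EuclideanDomain.gcdA z w
  set y := EuclideanDomain.gcdB z w
  have hcop : a * x + b * y = 1 := by
    apply mul_left_cancel₀ hg0
    calc g * (a * x + b * y) = (g * a) * x + (g * b) * y := by ring
      _ = g * 1 := by rw [← ha, ← hb, ← hbez, mul_one]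
  have hn : a.norm = b.norm := by
    rw [ha, hb, Zsqrtd.norm_mul, Zsqrtd.norm_mul] at h
    exact mul_left_cancel₀ (fun h0 => hg0 (GaussianInt.norm_eq_zero.mp h0)) h
  have hab : a * star a = b * star b := by
    rw [← Zsqrtd.norm_eq_mul_conj, ← Zsqrtd.norm_eq_mul_conj, hn]
  have hic : IsCoprime a b := ⟨x, y, by rw [← hcop]; ring⟩
  obtain ⟨c, hc⟩ : a ∣ star b := hic.dvd_of_dvd_mul_left ⟨star a, hab.symm⟩
  have hcn : c.norm = 1 := by
    have h1 : (star b).norm = a.norm * c.norm := by rw [hc, Zsqrtd.norm_mul]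
    rw [Zsqrtd.norm_conj, ← hn] at h1
    have h2 : a.norm ≠ 0 := fun h0 => ha0 (GaussianInt.norm_eq_zero.mp h0)
    exact (mul_left_cancel₀ h2 (by rw [mul_one]; exact h1)).symm
  refine ⟨g, a, star c, ha, ?_, ?_, ?_⟩
  · have : b = star c * star a := by
      rw [← star_star b, hc, star_mul]
    rw [mul_assoc, ← this]; exact hb
  · rw [Zsqrtd.norm_conj]; exact hcn
  · by_contra hodd
    have hA : a.norm % 2 = 0 := by omega
    have hB : b.norm % 2 = 0 := by omega
    have key : ∀ t : GaussianInt, t.norm % 2 = 0 → ∃ k, t.re + t.im = 2 * k := by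
      intro t ht
      rw [Zsqrtd.norm_def] at ht
      have e : Even (t.re * t.re + t.im * t.im) := by
        rw [Int.even_iff]; rw [← ht]; congr 1; ring
      have : Even (t.re + t.im) := by
        simp only [Int.even_add, Int.even_mul] at e ⊢
        tauto
      obtain ⟨k, hk⟩ := this
      exact ⟨k, by omega⟩
    obtain ⟨k, hk⟩ := key a hA
    obtain ⟨l, hl⟩ := key b hB
    have h1 := congrArg Zsqrtd.re hcop
    have h2 := congrArg Zsqrtd.im hcop
    simp only [Zsqrtd.re_add, Zsqrtd.re_mul, Zsqrtd.im_add, Zsqrtd.im_mul, Zsqrtd.re_one, Zsqrtd.im_one] at h1 h2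
    have : 2 * (k * (x.re + x.im) + l * (y.re + y.im) - a.im * x.im - b.im * y.im) = 1 := by
      linear_combination h1 + h2 - (x.re + x.im) * hk - (y.re + y.im) * hl
    omega

lemma r_sq_le (n : ℕ) (hn : 0 < n) :
    r n ^ 2 ≤ ∑ p ∈ n.divisorsAntidiagonal, (if p.1 % 2 = 1 then r p.1 else 0) * r p.2 := by
  classical
  have h1 : 0 < (Gp 1).card := Finset.card_pos.mpr ⟨1, by rw [mem_Gp]; simp⟩
  have hex : ∀ q : GaussianInt × GaussianInt, ∃ t : GaussianInt × GaussianInt × GaussianInt,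
      q ∈ Gp n ×ˢ Gp n → q.1 = t.1 * t.2.1 ∧ q.2 = t.1 * t.2.2 * star t.2.1 ∧ t.2.2.norm = 1 ∧
        t.2.1.norm % 2 = 1 := by
    intro q
    by_cases hq : q ∈ Gp n ×ˢ Gp n
    · rw [Finset.mem_product, mem_Gp, mem_Gp] at hq
      obtain ⟨g, a, u, h⟩ := factor q.1 q.2 (by
        intro h0
        rw [h0] at hq
        have := hq.1
        simp at this
        omega) (by rw [hq.1, hq.2])
      exact ⟨(g, a, u), fun _ => h⟩
    · exact ⟨(0, 0, 0), fun h => absurd h hq⟩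
  choose t ht using hex
  have hunit : ∀ v : GaussianInt, v.norm = 1 → v * star v = 1 := by
    intro v hv
    rw [← Zsqrtd.norm_eq_mul_conj, hv]; simp
  let T : Finset (GaussianInt × GaussianInt × GaussianInt) :=
    (n.divisorsAntidiagonal.filter (fun p => p.1 % 2 = 1)).biUnion
      (fun p => Gp p.2 ×ˢ Gp p.1 ×ˢ Gp 1)
  have hcard : ((Gp n ×ˢ Gp n) ×ˢ Gp 1).card ≤ T.card := by
    apply Finset.card_le_card_of_injOn
      (fun q => ((t q.1).1 * star q.2, q.2 * (t q.1).2.1, q.2 * q.2 * (t q.1).2.2))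
    · rintro ⟨q, v⟩ hq
      rw [Finset.mem_coe, Finset.mem_product] at hq
      obtain ⟨hq, hv⟩ := hq
      obtain ⟨e1, e2, e3, e4⟩ := ht q hq
      rw [mem_Gp] at hv
      simp only at hv hq e1 e2 e3 e4 ⊢
      rw [Finset.mem_product, mem_Gp, mem_Gp] at hq
      have hN := hq.1
      rw [e1, Zsqrtd.norm_mul] at hN
      rw [Finset.mem_coe]
      simp only [T]
      rw [Finset.mem_biUnion]
      have p1 := GaussianInt.norm_nonneg (t q).1
      have p2 := GaussianInt.norm_nonneg (t q).2.1
      refine ⟨((t q).2.1.norm.toNat, (t q).1.norm.toNat), ?_, ?_⟩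
      · rw [Finset.mem_filter, Nat.mem_divisorsAntidiagonal]
        refine ⟨⟨?_, hn.ne'⟩, ?_⟩
        · simp only
          zify
          rw [Int.toNat_of_nonneg p1, Int.toNat_of_nonneg p2, mul_comm]
          exact hN
        · simp only
          omega
      · rw [Finset.mem_product, Finset.mem_product, mem_Gp, mem_Gp, mem_Gp]
        simp only [Zsqrtd.norm_mul, Zsqrtd.norm_conj, e3]
        push_cast at hv
        rw [hv, Int.toNat_of_nonneg p1, Int.toNat_of_nonneg p2]
        simp
    · rintro ⟨q, v⟩ hq ⟨q', v'⟩ hq' heq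
      rw [Finset.mem_coe, Finset.mem_product] at hq hq'
      obtain ⟨hq, hv⟩ := hq
      obtain ⟨hq', hv'⟩ := hq'
      obtain ⟨e1, e2, e3, e4⟩ := ht q hq
      obtain ⟨e1', e2', e3', e4'⟩ := ht q' hq'
      rw [mem_Gp] at hv hv'
      simp only [Prod.mk.injEq] at heq
      simp only at hv hq e1 e2 e3 e4 hv' hq' e1' e2' e3' e4'
      push_cast at hv hv'
      have uv := hunit v hv
      have uv' := hunit v' hv'
      obtain ⟨f1, f2, f3⟩ := heq
      have f2s := congrArg star f2
      simp only [star_mul] at f2s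
      have z1 : q.1 = q'.1 := by
        rw [e1, e1']
        calc (t q).1 * (t q).2.1 = ((t q).1 * star v) * (v * (t q).2.1) := by
              linear_combination (-(t q).1 * (t q).2.1) * uv
          _ = ((t q').1 * star v') * (v' * (t q').2.1) := by rw [f1, f2]
          _ = _ := by linear_combination ((t q').1 * (t q').2.1) * uv'
      have z2 : q.2 = q'.2 := by
        rw [e2, e2']
        calc (t q).1 * (t q).2.2 * star (t q).2.1
            = ((t q).1 * star v) * (v * v * (t q).2.2) * (star (t q).2.1 * star v) := by
              linear_combination (-(t q).1 * (t q).2.2 * star (t q).2.1) * (v * star v + 1) * uv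
          _ = ((t q').1 * star v') * (v' * v' * (t q').2.2) * (star (t q').2.1 * star v') := by
              rw [f1, f3, f2s]
          _ = _ := by
              linear_combination ((t q').1 * (t q').2.2 * star (t q').2.1) * (v' * star v' + 1) * uv'
      have hqq : q = q' := Prod.ext z1 z2
      subst hqq
      have hg0 : (t q).2.1 ≠ 0 := by
        intro h0; rw [h0] at e4; simp at e4
      have : v = v' := mul_right_cancel₀ hg0 f2
      rw [this]
  rw [Finset.card_product, Finset.card_product, card_Gp] at hcard
  have hT : T.card ≤ ∑ p ∈ n.divisorsAntidiagonal.filter (fun p => p.1 % 2 = 1),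
      (r p.1 * r p.2) * (Gp 1).card := by
    refine Finset.card_biUnion_le.trans (le_of_eq ?_)
    refine Finset.sum_congr rfl fun p _ => ?_
    rw [Finset.card_product, Finset.card_product, card_Gp, card_Gp]; ring
  rw [← Finset.sum_mul, Finset.sum_filter] at hT
  have := Nat.le_of_mul_le_mul_right (hcard.trans hT) h1
  rw [sq]
  refine this.trans (le_of_eq ?_)
  refine Finset.sum_congr rfl fun p _ => ?_
  split_ifs <;> simp

lemma sum_r_eq (k m : ℕ) (hm : k < (m + 1) ^ 2) (P : ℕ → Prop) [DecidablePred P] :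
    (∑ n ∈ Finset.Ioc 0 k, if P n then r n else 0) =
      (((Finset.Icc (-(m:ℤ)) m) ×ˢ (Finset.Icc (-(m:ℤ)) m)).filter
        (fun p => 0 < p.1 ^ 2 + p.2 ^ 2 ∧ p.1 ^ 2 + p.2 ^ 2 ≤ (k : ℤ) ∧
          P (p.1 ^ 2 + p.2 ^ 2).toNat)).card := by
  rw [← Finset.sum_filter]
  rw [Finset.card_eq_sum_card_fiberwise (f := fun p : ℤ × ℤ => (p.1 ^ 2 + p.2 ^ 2).toNat)
    (t := (Finset.Ioc 0 k).filter P)]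
  · refine Finset.sum_congr rfl fun n hn => ?_
    rw [r_eq]
    congr 1
    ext p
    rw [Finset.mem_filter, Finset.mem_Ioc] at hn
    rw [mem_Sp, Finset.mem_filter, Finset.mem_filter, Finset.mem_product, Finset.mem_Icc,
      Finset.mem_Icc]
    constructor
    · intro h
      have hk : (n : ℤ) ≤ k := by exact_mod_cast hn.1.2
      have h0 : (0 : ℤ) < n := by exact_mod_cast hn.1.1
      have hm' : (k : ℤ) < (m + 1) ^ 2 := by exact_mod_cast hm
      have q1 : |p.1| < (m : ℤ) + 1 := abs_lt_of_sq_lt_sq (by nlinarith [sq_nonneg p.2]) (by positivity)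
      have q2 : |p.2| < (m : ℤ) + 1 := abs_lt_of_sq_lt_sq (by nlinarith [sq_nonneg p.1]) (by positivity)
      rw [abs_lt] at q1 q2
      refine ⟨⟨⟨⟨by omega, by omega⟩, by omega, by omega⟩, by omega, by omega, ?_⟩, by omega⟩
      rw [h]; simpa using hn.2
    · rintro ⟨⟨-, h1, h2, h3⟩, h4⟩
      omega
  · intro p hp
    rw [Finset.mem_coe, Finset.mem_filter] at hp
    obtain ⟨-, h1, h2, h3⟩ := hp
    rw [Finset.mem_coe, Finset.mem_filter, Finset.mem_Ioc]
    refine ⟨⟨?_, ?_⟩, h3⟩ <;> simp only <;> omega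

lemma sum_sq_Icc (m : ℕ) : ∑ a ∈ Finset.Icc (-(m:ℤ)) m, (a:ℝ) ^ 2 =
    m * (m + 1) * (2 * m + 1) / 3 := by
  induction m with
  | zero => simp
  | succ m ih =>
    have : Finset.Icc (-((m + 1 : ℕ):ℤ)) ((m + 1 : ℕ):ℤ) =
        insert (-((m:ℤ) + 1)) (insert ((m:ℤ) + 1) (Finset.Icc (-(m:ℤ)) m)) := by
      ext a; simp only [Finset.mem_insert, Finset.mem_Icc]; push_cast; omega
    rw [this, Finset.sum_insert, Finset.sum_insert, ih]
    · push_cast; ring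
    · simp
    · simp only [Finset.mem_insert, Finset.mem_Icc]; omega

/-- row length bound -/
lemma row_bound (k a s : ℝ) (t : ℝ) (hs : 0 < s) (h : t ^ 2 ≤ k - a ^ 2) :
    t ≤ (k - a ^ 2) / (2 * s) + s / 2 := by
  have : (k - a ^ 2) / (2 * s) + s / 2 - t = (k - a ^ 2 - t ^ 2 + (t - s) ^ 2) / (2 * s) := by
    field_simp; ring
  have : 0 ≤ (k - a ^ 2 - t ^ 2 + (t - s) ^ 2) / (2 * s) := by
    apply div_nonneg <;> nlinarith [sq_nonneg (t - s)]
  linarith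

lemma row_card (k : ℕ) (m : ℕ) (a : ℤ) (ha : a ^ 2 ≤ k) :
    ((Finset.Icc (-(m:ℤ)) m).filter (fun b => a ^ 2 + b ^ 2 ≤ (k:ℤ))).card ≤
      2 * Nat.sqrt ((k:ℤ) - a ^ 2).toNat + 1 := by
  set t := Nat.sqrt ((k:ℤ) - a ^ 2).toNat with ht
  have : ((Finset.Icc (-(m:ℤ)) m).filter (fun b => a ^ 2 + b ^ 2 ≤ (k:ℤ))) ⊆
      Finset.Icc (-(t:ℤ)) t := by
    intro b hb
    rw [Finset.mem_filter] at hb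
    have h1 : b.natAbs ≤ t := by
      rw [ht, Nat.le_sqrt']
      zify
      rw [sq_abs, Int.toNat_of_nonneg (by omega)]
      omega
    rw [Finset.mem_Icc]; omega
  refine (Finset.card_le_card this).trans ?_
  rw [Int.card_Icc]; omega

lemma row_card_odd (k : ℕ) (m : ℕ) (a : ℤ) (ha : a ^ 2 ≤ k) :
    ((Finset.Icc (-(m:ℤ)) m).filter (fun b => a ^ 2 + b ^ 2 ≤ (k:ℤ) ∧
      (a ^ 2 + b ^ 2) % 2 = 1)).card ≤
      Nat.sqrt ((k:ℤ) - a ^ 2).toNat + 1 := by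
  set t := Nat.sqrt ((k:ℤ) - a ^ 2).toNat with ht
  have hc : (Finset.Icc (0:ℤ) t).card = t + 1 := by rw [Int.card_Icc]; omega
  rw [← hc]
  have hpar : ∀ b : ℤ, (a ^ 2 + b ^ 2) % 2 = 1 → (a + b) % 2 = 1 := by
    intro b hb
    rw [← Int.odd_iff] at hb ⊢
    simp only [Int.odd_add, Int.odd_pow, Int.even_pow] at hb ⊢
    simpa using hb
  apply Finset.card_le_card_of_injOn (fun b : ℤ => (b + (t:ℤ)) / 2)
  · intro b hb
    rw [Finset.mem_coe, Finset.mem_filter] at hb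
    have h1 : b.natAbs ≤ t := by
      rw [ht, Nat.le_sqrt']
      zify
      rw [sq_abs, Int.toNat_of_nonneg (by omega)]
      omega
    rw [Finset.mem_coe, Finset.mem_Icc]
    simp only
    omega
  · intro b hb c hc h
    rw [Finset.mem_coe, Finset.mem_filter] at hb hc
    have := hpar b hb.2.2
    have := hpar c hc.2.2
    simp only at h
    omega

lemma sum_sqrt_bound (k m : ℕ) (hm : m ^ 2 ≤ k) :
    ∑ a ∈ Finset.Icc (-(m:ℤ)) m, (Nat.sqrt ((k:ℤ) - a ^ 2).toNat : ℝ) ≤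
      5 / 4 * k + 23 / 60 * (m ^ 2 + m) + 1 / 5 := by
  set s : ℝ := 2 / 5 * (2 * m + 1) with hs
  have hs0 : 0 < s := by positivity
  have h1 : ∑ a ∈ Finset.Icc (-(m:ℤ)) m, (Nat.sqrt ((k:ℤ) - a ^ 2).toNat : ℝ) ≤
      ∑ a ∈ Finset.Icc (-(m:ℤ)) m, ((k / (2 * s) + s / 2) - 1 / (2 * s) * (a:ℝ) ^ 2) := by
    refine Finset.sum_le_sum fun a ha => ?_
    rw [Finset.mem_Icc] at ha
    have ha2 : a ^ 2 ≤ (k:ℤ) := by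
      have : (m:ℤ) ^ 2 ≤ k := by exact_mod_cast hm
      nlinarith
    have := row_bound k a s (Nat.sqrt ((k:ℤ) - a ^ 2).toNat : ℝ) hs0 (by
      have h := Nat.sqrt_le' ((k:ℤ) - a ^ 2).toNat
      zify at h
      rw [Int.toNat_of_nonneg (by omega)] at h
      exact_mod_cast h)
    refine this.trans (le_of_eq ?_)
    field_simp
    ring
  refine h1.trans (le_of_eq ?_)
  rw [Finset.sum_sub_distrib, ← Finset.mul_sum, sum_sq_Icc, Finset.sum_const, Int.card_Icc]
  have : ((m:ℤ) + 1 - -(m:ℤ)).toNat = 2 * m + 1 := by omega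
  rw [this, nsmul_eq_mul, hs]
  push_cast
  field_simp
  ring

lemma card_prod_filter (s t : Finset ℤ) (Q : ℤ × ℤ → Prop) [DecidablePred Q] :
    ((s ×ˢ t).filter Q).card = ∑ a ∈ s, (t.filter (fun b => Q (a, b))).card := by
  simp only [Finset.card_filter]
  rw [Finset.sum_product]

lemma sum_const_Icc (m : ℕ) : ∑ _a ∈ Finset.Icc (-(m:ℤ)) m, (1:ℝ) = 2 * m + 1 := by
  rw [Finset.sum_const, Int.card_Icc]
  have : ((m:ℤ) + 1 - -(m:ℤ)).toNat = 2 * m + 1 := by omega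
  rw [this]; simp

lemma A_bound (k : ℕ) : ((∑ n ∈ Finset.Ioc 0 k, r n : ℕ) : ℝ) ≤ 4 * k := by
  have hif : (∑ n ∈ Finset.Ioc 0 k, r n) = ∑ n ∈ Finset.Ioc 0 k, if True then r n else 0 := by simp
  rw [hif]
  by_cases hk : k < 16
  · rw [sum_r_eq k 3 (by omega) (fun _ => True)]
    norm_cast
    clear hif
    revert k
    decide +kernel
  · set m := Nat.sqrt k with hm
    have m1 : m ^ 2 ≤ k := Nat.sqrt_le' k
    have m2 : k < (m + 1) ^ 2 := Nat.lt_succ_sqrt' k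
    have m4 : 4 ≤ m := by rw [hm, Nat.le_sqrt]; omega
    rw [sum_r_eq k m m2 (fun _ => True)]
    have hsub : (((Finset.Icc (-(m:ℤ)) m) ×ˢ (Finset.Icc (-(m:ℤ)) m)).filter
        (fun p => 0 < p.1 ^ 2 + p.2 ^ 2 ∧ p.1 ^ 2 + p.2 ^ 2 ≤ (k : ℤ) ∧ True)).card + 1 ≤
        (((Finset.Icc (-(m:ℤ)) m) ×ˢ (Finset.Icc (-(m:ℤ)) m)).filter
        (fun p => p.1 ^ 2 + p.2 ^ 2 ≤ (k : ℤ))).card := by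
      rw [← Finset.card_insert_of_notMem (a := ((0:ℤ),(0:ℤ)))]
      · apply Finset.card_le_card
        intro p hp
        rw [Finset.mem_insert] at hp
        rcases hp with rfl | hp
        · simp
        · rw [Finset.mem_filter] at hp ⊢
          exact ⟨hp.1, hp.2.2.1⟩
      · simp
    rw [card_prod_filter _ _ (fun p : ℤ × ℤ => p.1 ^ 2 + p.2 ^ 2 ≤ (k : ℤ))] at hsub
    have hrow : (((∑ a ∈ Finset.Icc (-(m:ℤ)) m, ((Finset.Icc (-(m:ℤ)) m).filter
        (fun b => a ^ 2 + b ^ 2 ≤ (k:ℤ))).card : ℕ)) : ℝ) ≤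
        ∑ a ∈ Finset.Icc (-(m:ℤ)) m, (2 * (Nat.sqrt ((k:ℤ) - a ^ 2).toNat : ℝ) + 1) := by
      push_cast
      refine Finset.sum_le_sum fun a ha => ?_
      rw [Finset.mem_Icc] at ha
      have ha2 : a ^ 2 ≤ (k:ℤ) := by
        have : (m:ℤ) ^ 2 ≤ k := by exact_mod_cast m1
        nlinarith
      exact_mod_cast row_card k m a ha2
    rw [Finset.sum_add_distrib, ← Finset.mul_sum, sum_const_Icc] at hrow
    have hP := sum_sqrt_bound k m m1
    have hsub' := (Nat.cast_le (α := ℝ)).mpr hsub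
    rw [Nat.cast_add, Nat.cast_one] at hsub'
    have m1' : (m:ℝ) ^ 2 ≤ k := by exact_mod_cast m1
    have m4' : (4:ℝ) ≤ m := by exact_mod_cast m4
    simp only at hsub' hrow hP ⊢
    nlinarith

lemma B_bound (k : ℕ) :
    ((∑ n ∈ Finset.Ioc 0 k, if n % 2 = 1 then r n else 0 : ℕ) : ℝ) ≤ 2.4 * k + 2.4 := by
  by_cases hk : k < 9
  · rw [sum_r_eq k 2 (by omega) (fun n => n % 2 = 1)]
    have : ∀ k : ℕ, k < 9 → 5 * (((Finset.Icc (-((2:ℕ):ℤ)) (2:ℕ)) ×ˢ (Finset.Icc (-((2:ℕ):ℤ)) (2:ℕ))).filter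
        (fun p : ℤ × ℤ => 0 < p.1 ^ 2 + p.2 ^ 2 ∧ p.1 ^ 2 + p.2 ^ 2 ≤ (k : ℤ) ∧
          (p.1 ^ 2 + p.2 ^ 2).toNat % 2 = 1)).card ≤ 12 * k + 12 := by
      decide +kernel
    have h := (Nat.cast_le (α := ℝ)).mpr (this k hk)
    rw [Nat.cast_mul] at h
    push_cast at h ⊢
    linarith
  · set m := Nat.sqrt k with hm
    have m1 : m ^ 2 ≤ k := Nat.sqrt_le' k
    have m2 : k < (m + 1) ^ 2 := Nat.lt_succ_sqrt' k
    have m4 : 3 ≤ m := by rw [hm, Nat.le_sqrt]; omega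
    rw [sum_r_eq k m m2 (fun n => n % 2 = 1)]
    have hsub : (((Finset.Icc (-(m:ℤ)) m) ×ˢ (Finset.Icc (-(m:ℤ)) m)).filter
        (fun p => 0 < p.1 ^ 2 + p.2 ^ 2 ∧ p.1 ^ 2 + p.2 ^ 2 ≤ (k : ℤ) ∧
          (p.1 ^ 2 + p.2 ^ 2).toNat % 2 = 1)).card ≤
        (((Finset.Icc (-(m:ℤ)) m) ×ˢ (Finset.Icc (-(m:ℤ)) m)).filter
        (fun p => p.1 ^ 2 + p.2 ^ 2 ≤ (k : ℤ) ∧ (p.1 ^ 2 + p.2 ^ 2) % 2 = 1)).card := by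
      apply Finset.card_le_card
      intro p hp
      rw [Finset.mem_filter] at hp ⊢
      exact ⟨hp.1, hp.2.2.1, by omega⟩
    rw [card_prod_filter _ _
      (fun p : ℤ × ℤ => p.1 ^ 2 + p.2 ^ 2 ≤ (k : ℤ) ∧ (p.1 ^ 2 + p.2 ^ 2) % 2 = 1)] at hsub
    have hrow : (((∑ a ∈ Finset.Icc (-(m:ℤ)) m, ((Finset.Icc (-(m:ℤ)) m).filter
        (fun b => a ^ 2 + b ^ 2 ≤ (k:ℤ) ∧ (a ^ 2 + b ^ 2) % 2 = 1)).card : ℕ)) : ℝ) ≤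
        ∑ a ∈ Finset.Icc (-(m:ℤ)) m, ((Nat.sqrt ((k:ℤ) - a ^ 2).toNat : ℝ) + 1) := by
      push_cast
      refine Finset.sum_le_sum fun a ha => ?_
      rw [Finset.mem_Icc] at ha
      have ha2 : a ^ 2 ≤ (k:ℤ) := by
        have : (m:ℤ) ^ 2 ≤ k := by exact_mod_cast m1
        nlinarith
      exact_mod_cast row_card_odd k m a ha2
    rw [Finset.sum_add_distrib, sum_const_Icc] at hrow
    have hP := sum_sqrt_bound k m m1
    have hsub' := (Nat.cast_le (α := ℝ)).mpr hsub
    have m1' : (m:ℝ) ^ 2 ≤ k := by exact_mod_cast m1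
    have m4' : (3:ℝ) ≤ m := by exact_mod_cast m4
    simp only at hsub' hrow hP ⊢
    norm_num
    nlinarith

lemma abel (f : ℕ → ℝ) (M : ℕ) : ∑ e ∈ Finset.Ioc 0 M, f e / e =
    (∑ e ∈ Finset.Ioc 0 M, f e) / (M + 1) +
      ∑ k ∈ Finset.Ioc 0 M, (∑ e ∈ Finset.Ioc 0 k, f e) / (k * (k + 1)) := by
  induction M with
  | zero => simp
  | succ M ih =>
    rw [Finset.sum_Ioc_succ_top (by omega), ih,
      Finset.sum_Ioc_succ_top (by omega) (fun k : ℕ => (∑ e ∈ Finset.Ioc 0 k, f e) / (k * (k + 1))),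
      Finset.sum_Ioc_succ_top (by omega) f]
    push_cast
    field_simp
    ring

lemma harm_bound (f : ℕ → ℝ) (c : ℝ)
    (hf : ∀ k, ∑ e ∈ Finset.Ioc 0 k, f e ≤ c * k + c) (M : ℕ) :
    ∑ e ∈ Finset.Ioc 0 M, f e / e ≤ c + c * ∑ e ∈ Finset.Ioc 0 M, (1:ℝ) / e := by
  rw [abel, Finset.mul_sum]
  apply add_le_add
  · rw [div_le_iff₀ (by positivity)]
    have := hf M
    linarith
  · refine Finset.sum_le_sum fun k hk => ?_
    rw [Finset.mem_Ioc] at hk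
    have hk' : (0:ℝ) < k := by exact_mod_cast hk.1
    rw [div_le_iff₀ (by positivity)]
    have := hf k
    have e : c * (1 / (k:ℝ)) * (k * (k + 1)) = c * k + c := by field_simp
    linarith

/-- For every real `x ≥ 1`, one has `R₂(x) = ∑_{x < n ≤ 2x} r(n)² ≤ 19.2·x·log(2e²x)`. -/
theorem sum_r_sq_le (x : ℝ) (hx : 1 ≤ x) :
    (∑ n ∈ Finset.Ioc ⌊x⌋₊ ⌊2 * x⌋₊, (r n : ℝ) ^ 2) ≤ 19.2 * x * Real.log (2 * Real.exp 2 * x) := by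
  set M := ⌊2 * x⌋₊ with hM
  have hMx : (M:ℝ) ≤ 2 * x := Nat.floor_le (by linarith)
  have hM1 : 1 ≤ M := by
    rw [hM]; apply Nat.le_floor; push_cast; linarith
  have hM1' : (1:ℝ) ≤ M := by exact_mod_cast hM1
  have s1 : (∑ n ∈ Finset.Ioc ⌊x⌋₊ M, (r n : ℝ) ^ 2) ≤ ∑ n ∈ Finset.Ioc 0 M, (r n : ℝ) ^ 2 := by
    apply Finset.sum_le_sum_of_subset_of_nonneg
    · exact Finset.Ioc_subset_Ioc_left (Nat.zero_le _)
    · intros; positivity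
  let F : ArithmeticFunction ℕ := ⟨fun n => if n % 2 = 1 then r n else 0, by simp⟩
  let G : ArithmeticFunction ℕ := ⟨fun n => if n = 0 then 0 else r n, by simp⟩
  have s2 : ∑ n ∈ Finset.Ioc 0 M, r n ^ 2 ≤ ∑ n ∈ Finset.Ioc 0 M, (F * G) n := by
    refine Finset.sum_le_sum fun n hn => ?_
    rw [Finset.mem_Ioc] at hn
    refine (r_sq_le n hn.1).trans (le_of_eq ?_)
    rw [ArithmeticFunction.mul_apply]
    refine Finset.sum_congr rfl fun p hp => ?_
    rw [Nat.mem_divisorsAntidiagonal] at hp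
    have : p.2 ≠ 0 := by
      intro h0; rw [h0] at hp; omega
    simp [F, G, this]
  rw [ArithmeticFunction.sum_Ioc_mul_eq_sum_sum] at s2
  have s3 := (Nat.cast_le (α := ℝ)).mpr s2
  have s4 : ((∑ n ∈ Finset.Ioc 0 M, F n * ∑ m ∈ Finset.Ioc 0 (M / n), G m : ℕ) : ℝ) ≤
      ∑ n ∈ Finset.Ioc 0 M, (4 * M) * ((F n : ℝ) / n) := by
    rw [Nat.cast_sum]
    refine Finset.sum_le_sum fun n hn => ?_
    rw [Finset.mem_Ioc] at hn
    have hG : ∑ m ∈ Finset.Ioc 0 (M / n), G m = ∑ m ∈ Finset.Ioc 0 (M / n), r m := by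
      refine Finset.sum_congr rfl fun m hm => ?_
      rw [Finset.mem_Ioc] at hm
      have : m ≠ 0 := by omega
      simp [G, this]
    rw [hG, Nat.cast_mul]
    have hA := A_bound (M / n)
    have hd : ((M / n : ℕ) : ℝ) ≤ M / n := Nat.cast_div_le
    calc (F n : ℝ) * ((∑ m ∈ Finset.Ioc 0 (M / n), r m : ℕ) : ℝ) ≤ F n * (4 * (M / n)) := by
          apply mul_le_mul_of_nonneg_left _ (Nat.cast_nonneg _)
          linarith
      _ = _ := by ring
  rw [← Finset.mul_sum] at s4
  have s5 := harm_bound (fun n => (F n : ℝ)) 2.4 (by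
    intro k
    have := B_bound k
    rw [← Nat.cast_sum]
    exact this) M
  have s6 : ∑ e ∈ Finset.Ioc 0 M, (1:ℝ) / e ≤ 1 + Real.log M := by
    refine le_trans (le_of_eq ?_) (harmonic_le_one_add_log M)
    rw [harmonic_eq_sum_Icc]
    push_cast
    simp only [one_div]
    rfl
  have hlogM : Real.log M ≤ Real.log (2 * x) := Real.log_le_log (by linarith) hMx
  have hlog : Real.log (2 * Real.exp 2 * x) = Real.log (2 * x) + 2 := by
    rw [show 2 * Real.exp 2 * x = (2 * x) * Real.exp 2 by ring,
      Real.log_mul (by linarith) (Real.exp_pos 2).ne', Real.log_exp]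
  have hl0 : 0 ≤ Real.log (2 * x) := Real.log_nonneg (by linarith)
  rw [hlog]
  push_cast at s3
  push_cast at s4
  have s7 : ∑ n ∈ Finset.Ioc 0 M, (F n : ℝ) / n ≤ 2.4 * (Real.log (2 * x) + 2) := by
    linarith
  have s8 : (4 * (M:ℝ)) * ∑ n ∈ Finset.Ioc 0 M, (F n : ℝ) / n ≤
      (4 * (2 * x)) * (2.4 * (Real.log (2 * x) + 2)) := by
    apply mul_le_mul (by linarith) s7
    · apply Finset.sum_nonneg; intros; positivity
    · linarith
  linarith
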